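/- arXiv:1412.5679 — 2 statements merged into one kernel-verified Lean document; each statement's English description precedes it below -/
import Mathlib

section
/- There is an absolute constant C ≥ 1 with the following property. Let M > 0, α ∈ (0, 2), and C₄ ≥ 4, and let χ : ℝ → [0, 1] be a smooth nondecreasing function with χ(s) = 0 for s ≤ C₄⁴M and χ(s) = 1 for s ≥ 2C₄⁴M − 2M. Define β(r) := ∫_{8M}^r [ (4M/s² + 1/s)(1 − χ(s)) + (α/s) χ(s) ] ds for r ≥ 8M. Then C⁻¹ · r/M ≤ e^{β(r)} ≤ C · r/M for all r ∈ [8M, 10 C₄⁴ M], and C⁻¹ · C₄⁴ (r/(C₄⁴M))^α ≤ e^{β(r)} ≤ C · C₄⁴ (r/(C₄⁴M))^α for all r ≥ (1/10) C₄⁴ M. -/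
/-- The weight function `β` of (outs50): `β(8M) = 0` and
`β′(r) = (4M/r² + 1/r)(1 − χ(r)) + (α/r)χ(r)`, written in integral form. -/
noncomputable def kerrBeta (M α : ℝ) (χ : ℝ → ℝ) (r : ℝ) : ℝ :=
  ∫ s in (8 * M)..r, ((4 * M / s ^ 2 + 1 / s) * (1 - χ s) + α / s * χ s)

/-!
Expanding the integrand as `1/s + 4M/s² (1 - χ) + (α - 1) χ/s` gives
`β(r) = log (r/M) + (α - 1) ℓ(r) + O(1)` with `ℓ(r) = ∫_{8M}^r χ(s)/s ds`. A cutoff passing from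
`0` to `1` on `[R, 10R]` squeezes `ℓ(r)` between `log⁺ (r/(10R))` and `log⁺ (r/R)`. Hence `ℓ(r)` is
within `log 10` of `0` for `r ≤ 10R` and within `log 10` of `log (r/R)` for `r ≥ R/10`, and
exponentiating gives both regimes.
-/

open Set MeasureTheory intervalIntegral Real

lemma intervalIntegrable_of_continuousOn_Ioi {f : ℝ → ℝ} {a b : ℝ}
    (hf : ContinuousOn f (Ioi 0)) (ha : 0 < a) (hb : 0 < b) : IntervalIntegrable f volume a b :=
  (hf.mono (ordConnected_Ioi.uIcc_subset ha hb)).intervalIntegrable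

lemma intervalIntegrable_mul_of_continuousOn_Ioi {f g : ℝ → ℝ} {a b : ℝ}
    (hf : ContinuousOn f (Ioi 0)) (hg : LocallyIntegrable g) (ha : 0 < a) (hb : 0 < b) :
    IntervalIntegrable (fun s ↦ f s * g s) volume a b :=
  (hg.integrableOn_isCompact isCompact_uIcc).intervalIntegrable.continuousOn_mul <|
    hf.mono (ordConnected_Ioi.uIcc_subset ha hb)

lemma continuousOn_inv_Ioi : ContinuousOn (fun s : ℝ ↦ s⁻¹) (Ioi 0) :=
  continuousOn_inv₀.mono fun _ hs ↦ ne_of_gt hs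

lemma continuousOn_inv_sq_Ioi : ContinuousOn (fun s : ℝ ↦ (s ^ 2)⁻¹) (Ioi 0) :=
  (continuousOn_pow 2).inv₀ fun _ hs ↦ pow_ne_zero 2 (ne_of_gt hs)

lemma integral_inv_sq_of_pos {a b : ℝ} (ha : 0 < a) (hb : 0 < b) :
    ∫ s in a..b, (s ^ 2)⁻¹ = a⁻¹ - b⁻¹ := by
  have hasDerivAt_neg_inv (s : ℝ) (hs : s ∈ uIcc a b) :
      HasDerivAt (fun s : ℝ ↦ -s⁻¹) (s ^ 2)⁻¹ s :=
    (hasDerivAt_inv ((lt_min ha hb).trans_le hs.1).ne').fun_neg.congr_deriv (neg_neg _)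
  rw [integral_eq_sub_of_hasDerivAt hasDerivAt_neg_inv
    (intervalIntegrable_of_continuousOn_Ioi continuousOn_inv_sq_Ioi ha hb)]
  ring

lemma integral_inv_sq_mul_mem_Icc {g : ℝ → ℝ} {a r : ℝ} (hg : LocallyIntegrable g)
    (hg_mem : ∀ s, g s ∈ Icc (0 : ℝ) 1) (ha : 0 < a) (har : a ≤ r) :
    ∫ s in a..r, (s ^ 2)⁻¹ * g s ∈ Icc 0 a⁻¹ := by
  have hr : 0 < r := ha.trans_le har
  refine ⟨integral_nonneg har fun s _ ↦ mul_nonneg (by positivity) (hg_mem s).1, ?_⟩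
  calc ∫ s in a..r, (s ^ 2)⁻¹ * g s
      ≤ ∫ s in a..r, (s ^ 2)⁻¹ :=
        integral_mono_on har
          (intervalIntegrable_mul_of_continuousOn_Ioi continuousOn_inv_sq_Ioi hg ha hr)
          (intervalIntegrable_of_continuousOn_Ioi continuousOn_inv_sq_Ioi ha hr)
          fun s _ ↦ mul_le_of_le_one_right (by positivity) (hg_mem s).2
    _ = a⁻¹ - r⁻¹ := integral_inv_sq_of_pos ha hr
    _ ≤ a⁻¹ := sub_le_self _ (by positivity)

/-- The logarithm `log (r / a) = ∫ s in a..r, 1 / s` with its density cut off by `χ`. It carries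
the whole dependence of the weight `β` on the exponent `α`. -/
noncomputable def cutoffLog (χ : ℝ → ℝ) (a r : ℝ) : ℝ :=
  ∫ s in a..r, s⁻¹ * χ s

section cutoffLog

variable {χ : ℝ → ℝ} {a b r R : ℝ}

lemma cutoffLog_add (hχ : LocallyIntegrable χ) (ha : 0 < a) (hb : 0 < b) (hr : 0 < r) :
    cutoffLog χ a b + cutoffLog χ b r = cutoffLog χ a r :=
  integral_add_adjacent_intervals
    (intervalIntegrable_mul_of_continuousOn_Ioi continuousOn_inv_Ioi hχ ha hb)
    (intervalIntegrable_mul_of_continuousOn_Ioi continuousOn_inv_Ioi hχ hb hr)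

lemma cutoffLog_nonneg (hχ_nonneg : ∀ s, 0 ≤ χ s) (ha : 0 < a) (har : a ≤ r) :
    0 ≤ cutoffLog χ a r :=
  integral_nonneg har fun s hs ↦ mul_nonneg (inv_nonneg.2 (ha.le.trans hs.1)) (hχ_nonneg s)

lemma cutoffLog_le_log (hχ : LocallyIntegrable χ) (hχ_le : ∀ s, χ s ≤ 1) (ha : 0 < a)
    (har : a ≤ r) : cutoffLog χ a r ≤ log (r / a) := by
  have hr : 0 < r := ha.trans_le har
  rw [← integral_inv_of_pos ha hr]
  exact integral_mono_on har
    (intervalIntegrable_mul_of_continuousOn_Ioi continuousOn_inv_Ioi hχ ha hr)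
    (intervalIntegrable_of_continuousOn_Ioi continuousOn_inv_Ioi ha hr)
    fun s hs ↦ mul_le_of_le_one_right (inv_nonneg.2 (ha.le.trans hs.1)) (hχ_le s)

lemma cutoffLog_eq_zero (hχ_zero : ∀ s ≤ R, χ s = 0) (haR : a ≤ R) (hrR : r ≤ R) :
    cutoffLog χ a r = 0 :=
  integral_zero_ae <| .of_forall fun s hs ↦ by
    rw [hχ_zero s (hs.2.trans (max_le haR hrR)), mul_zero]

lemma cutoffLog_eq_log (hχ_one : ∀ s, R ≤ s → χ s = 1) (hR : 0 < R) (hRr : R ≤ r) :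
    cutoffLog χ R r = log (r / R) := by
  rw [← integral_inv_of_pos hR (hR.trans_le hRr)]
  refine integral_congr fun s hs ↦ ?_
  rw [uIcc_of_le hRr] at hs
  simp only [hχ_one s hs.1, mul_one]

lemma cutoffLog_le_posLog (hχ : LocallyIntegrable χ) (hχ_le : ∀ s, χ s ≤ 1)
    (hχ_zero : ∀ s ≤ R, χ s = 0) (ha : 0 < a) (haR : a ≤ R) :
    cutoffLog χ a r ≤ log⁺ (r / R) := by
  have hR : 0 < R := ha.trans_le haR
  rcases le_total r R with hrR | hRr
  · exact (cutoffLog_eq_zero hχ_zero haR hrR).trans_le posLog_nonneg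
  · calc cutoffLog χ a r
        = cutoffLog χ a R + cutoffLog χ R r := (cutoffLog_add hχ ha hR (hR.trans_le hRr)).symm
      _ = cutoffLog χ R r := by rw [cutoffLog_eq_zero hχ_zero haR le_rfl, zero_add]
      _ ≤ log (r / R) := cutoffLog_le_log hχ hχ_le hR hRr
      _ ≤ log⁺ (r / R) := le_max_right _ _

lemma posLog_le_cutoffLog (hχ : LocallyIntegrable χ) (hχ_nonneg : ∀ s, 0 ≤ χ s)
    (hχ_one : ∀ s, R ≤ s → χ s = 1) (ha : 0 < a) (haR : a ≤ R) (har : a ≤ r) :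
    log⁺ (r / R) ≤ cutoffLog χ a r := by
  have hR : 0 < R := ha.trans_le haR
  refine max_le (cutoffLog_nonneg hχ_nonneg ha har) ?_
  rcases le_total r R with hrR | hRr
  · have hr : 0 < r := ha.trans_le har
    exact (log_nonpos (by positivity) ((div_le_one hR).2 hrR)).trans
      (cutoffLog_nonneg hχ_nonneg ha har)
  · rw [← cutoffLog_add hχ ha hR (hR.trans_le hRr), cutoffLog_eq_log hχ_one hR hRr]
    exact le_add_of_nonneg_left (cutoffLog_nonneg hχ_nonneg ha haR)

lemma abs_cutoffLog_le_log {c : ℝ} (hχ : LocallyIntegrable χ)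
    (hχ_mem : ∀ s, χ s ∈ Icc (0 : ℝ) 1) (hχ_zero : ∀ s ≤ R, χ s = 0) (hc : 1 ≤ c) (ha : 0 < a)
    (haR : a ≤ R) (har : a ≤ r) (hr : r ≤ c * R) :
    |cutoffLog χ a r| ≤ log c := by
  have hR : 0 < R := ha.trans_le haR
  rw [abs_of_nonneg (cutoffLog_nonneg (fun s ↦ (hχ_mem s).1) ha har)]
  calc cutoffLog χ a r
      ≤ log⁺ (r / R) := cutoffLog_le_posLog hχ (fun s ↦ (hχ_mem s).2) hχ_zero ha haR
    _ ≤ log⁺ c := posLog_le_posLog (div_nonneg (ha.le.trans har) hR.le) ((div_le_iff₀ hR).2 hr)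
    _ = log c := posLog_eq_log (hc.trans (le_abs_self c))

lemma abs_cutoffLog_sub_log_le {c : ℝ} (hχ : LocallyIntegrable χ)
    (hχ_mem : ∀ s, χ s ∈ Icc (0 : ℝ) 1) (hχ_zero : ∀ s ≤ R, χ s = 0)
    (hχ_one : ∀ s, c * R ≤ s → χ s = 1) (hc : 1 ≤ c) (ha : 0 < a) (haR : a ≤ R) (har : a ≤ r)
    (hr : R ≤ c * r) :
    |cutoffLog χ a r - log (r / R)| ≤ log c := by
  have hR : 0 < R := ha.trans_le haR
  have hr_pos : 0 < r := ha.trans_le har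
  have hc_pos : 0 < c := one_pos.trans_le hc
  have upper : cutoffLog χ a r ≤ log⁺ (r / R) :=
    cutoffLog_le_posLog hχ (fun s ↦ (hχ_mem s).2) hχ_zero ha haR
  have lower : log⁺ (r / (c * R)) ≤ cutoffLog χ a r :=
    posLog_le_cutoffLog hχ (fun s ↦ (hχ_mem s).1) hχ_one ha
      (haR.trans (le_mul_of_one_le_left hR.le hc)) har
  have posLog_inv_le : log⁺ (r / R)⁻¹ ≤ log c := by
    rw [← posLog_eq_log (hc.trans (le_abs_self c)), inv_div]
    exact posLog_le_posLog (by positivity) ((div_le_iff₀ hr_pos).2 hr)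
  have log_scaled : log (r / (c * R)) = log (r / R) - log c := by
    rw [mul_comm, ← div_div, log_div (by positivity) hc_pos.ne']
  have log_le_posLog : log (r / (c * R)) ≤ log⁺ (r / (c * R)) := le_max_right _ _
  have posLog_split : log⁺ (r / R) - log⁺ (r / R)⁻¹ = log (r / R) := posLog_sub_posLog_inv
  exact abs_le.2 ⟨by linarith, by linarith⟩

end cutoffLog

section kerrBeta

variable {M α A r R : ℝ} {χ : ℝ → ℝ}

lemma kerrBeta_eq_log_add_cutoffLog_add_integral (hχ : LocallyIntegrable χ) (hM : 0 < M)
    (hr : 0 < r) :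
    kerrBeta M α χ r = log (r / (8 * M)) + (α - 1) * cutoffLog χ (8 * M) r +
      4 * M * ∫ s in (8 * M)..r, (s ^ 2)⁻¹ * (1 - χ s) := by
  have ha : 0 < 8 * M := by positivity
  have int_inv := intervalIntegrable_of_continuousOn_Ioi continuousOn_inv_Ioi ha hr
  have int_tail : IntervalIntegrable (fun s ↦ 4 * M * ((s ^ 2)⁻¹ * (1 - χ s))) volume (8 * M) r :=
    (intervalIntegrable_mul_of_continuousOn_Ioi continuousOn_inv_sq_Ioi
      ((locallyIntegrable_const 1).sub hχ) ha hr).const_mul (4 * M)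
  have int_cutoff :=
    (intervalIntegrable_mul_of_continuousOn_Ioi continuousOn_inv_Ioi hχ ha hr).const_mul (α - 1)
  rw [← integral_inv_of_pos ha hr, cutoffLog, ← intervalIntegral.integral_const_mul,
    ← intervalIntegral.integral_const_mul, ← integral_add int_inv int_cutoff,
    ← integral_add (int_inv.add int_cutoff) int_tail]
  exact integral_congr fun s _ ↦ by ring

lemma abs_kerrBeta_sub_log_add_cutoffLog_le (hχ : LocallyIntegrable χ)
    (hχ_mem : ∀ s, χ s ∈ Icc (0 : ℝ) 1) (hM : 0 < M) (hr : 8 * M ≤ r) :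
    |kerrBeta M α χ r - (log (r / M) + (α - 1) * cutoffLog χ (8 * M) r)| ≤ log 8 := by
  have ha : 0 < 8 * M := by positivity
  have hr_pos : 0 < r := ha.trans_le hr
  obtain ⟨tail_nonneg, tail_le⟩ := integral_inv_sq_mul_mem_Icc (g := fun s ↦ 1 - χ s)
    ((locallyIntegrable_const 1).sub hχ)
    (fun s ↦ ⟨sub_nonneg.2 (hχ_mem s).2, sub_le_self _ (hχ_mem s).1⟩) ha hr
  have correction_nonneg :
      0 ≤ 4 * M * ∫ s in (8 * M)..r, (s ^ 2)⁻¹ * (1 - χ s) := by positivity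
  have correction_le : 4 * M * ∫ s in (8 * M)..r, (s ^ 2)⁻¹ * (1 - χ s) ≤ 1 / 2 :=
    calc 4 * M * ∫ s in (8 * M)..r, (s ^ 2)⁻¹ * (1 - χ s)
        ≤ 4 * M * (8 * M)⁻¹ := by gcongr
      _ = 1 / 2 := by field_simp; norm_num
  have half_le_log_eight : 1 / 2 ≤ log 8 :=
    calc (1 / 2 : ℝ) ≤ log 2 := by linarith [log_two_gt_d9]
      _ ≤ log 8 := log_le_log (by norm_num) (by norm_num)
  have log_scaled : log (r / (8 * M)) = log (r / M) - log 8 := by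
    rw [mul_comm, ← div_div, log_div (by positivity) (by norm_num)]
  rw [kerrBeta_eq_log_add_cutoffLog_add_integral hχ hM hr_pos, log_scaled]
  exact abs_le.2 ⟨by linarith, by linarith⟩

lemma abs_kerrBeta_sub_log_le (hχ : LocallyIntegrable χ) (hχ_mem : ∀ s, χ s ∈ Icc (0 : ℝ) 1)
    (hχ_zero : ∀ s ≤ R, χ s = 0) (hM : 0 < M) (hα : |α - 1| ≤ A) (hR : 8 * M ≤ R)
    (hr : 8 * M ≤ r) (hrR : r ≤ 10 * R) :
    |kerrBeta M α χ r - log (r / M)| ≤ log 8 + A * log 10 :=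
  calc |kerrBeta M α χ r - log (r / M)|
      = |kerrBeta M α χ r - (log (r / M) + (α - 1) * cutoffLog χ (8 * M) r) +
          (α - 1) * cutoffLog χ (8 * M) r| := by ring_nf
    _ ≤ |kerrBeta M α χ r - (log (r / M) + (α - 1) * cutoffLog χ (8 * M) r)| +
          |α - 1| * |cutoffLog χ (8 * M) r| := by
        rw [← abs_mul]; exact abs_add_le _ _
    _ ≤ log 8 + A * log 10 := by
        gcongr
        · exact abs_kerrBeta_sub_log_add_cutoffLog_le hχ hχ_mem hM hr
        · exact (abs_nonneg _).trans hα
        · exact abs_cutoffLog_le_log hχ hχ_mem hχ_zero (by norm_num) (by positivity) hR hr hrR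

lemma abs_kerrBeta_sub_log_add_mul_log_le (hχ : LocallyIntegrable χ)
    (hχ_mem : ∀ s, χ s ∈ Icc (0 : ℝ) 1) (hχ_zero : ∀ s ≤ R, χ s = 0)
    (hχ_one : ∀ s, 10 * R ≤ s → χ s = 1) (hM : 0 < M) (hα : |α - 1| ≤ A) (hR : 8 * M ≤ R)
    (hr : 8 * M ≤ r) (hRr : R ≤ 10 * r) :
    |kerrBeta M α χ r - (log (R / M) + α * log (r / R))| ≤ log 8 + A * log 10 := by
  have hR_pos : 0 < R := by linarith
  have hr_pos : 0 < r := by linarith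
  have log_split : log (r / M) = log (R / M) + log (r / R) := by
    rw [← log_mul (by positivity) (by positivity), mul_comm, div_mul_div_cancel₀ hR_pos.ne']
  calc |kerrBeta M α χ r - (log (R / M) + α * log (r / R))|
      = |kerrBeta M α χ r - (log (r / M) + (α - 1) * cutoffLog χ (8 * M) r) +
          (α - 1) * (cutoffLog χ (8 * M) r - log (r / R))| := by rw [log_split]; ring_nf
    _ ≤ |kerrBeta M α χ r - (log (r / M) + (α - 1) * cutoffLog χ (8 * M) r)| +
          |α - 1| * |cutoffLog χ (8 * M) r - log (r / R)| := by
        rw [← abs_mul]; exact abs_add_le _ _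
    _ ≤ log 8 + A * log 10 := by
        gcongr
        · exact abs_kerrBeta_sub_log_add_cutoffLog_le hχ hχ_mem hM hr
        · exact (abs_nonneg _).trans hα
        · exact abs_cutoffLog_sub_log_le hχ hχ_mem hχ_zero hχ_one (by norm_num) (by positivity)
            hR hr hRr

end kerrBeta

lemma inv_mul_exp_le_and_exp_le_mul_exp {C x y : ℝ} (hC : 0 < C) (h : |y - x| ≤ log C) :
    C⁻¹ * exp x ≤ exp y ∧ exp y ≤ C * exp x := by
  obtain ⟨lower, upper⟩ := abs_le.1 h
  rw [← exp_log hC, ← exp_neg, ← exp_add, ← exp_add, exp_le_exp, exp_le_exp]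
  exact ⟨by linarith, by linarith⟩

theorem beta_weight_growth_general {M α A K : ℝ} {χ : ℝ → ℝ} (hM : 0 < M) (hα : |α - 1| ≤ A)
    (hK : 80 ≤ K) (hχ : LocallyIntegrable χ) (hχ_mem : ∀ s, χ s ∈ Icc (0 : ℝ) 1)
    (hχ_zero : ∀ s ≤ K * M, χ s = 0) (hχ_one : ∀ s, 10 * K * M ≤ s → χ s = 1) :
    (∀ r ∈ Icc (8 * M) (10 * K * M),
      (8 * 10 ^ A)⁻¹ * (r / M) ≤ exp (kerrBeta M α χ r) ∧
      exp (kerrBeta M α χ r) ≤ 8 * 10 ^ A * (r / M)) ∧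
    (∀ r, 1 / 10 * K * M ≤ r →
      (8 * 10 ^ A)⁻¹ * (K * (r / (K * M)) ^ α) ≤ exp (kerrBeta M α χ r) ∧
      exp (kerrBeta M α χ r) ≤ 8 * 10 ^ A * (K * (r / (K * M)) ^ α)) := by
  have hK_pos : 0 < K := by linarith
  have hC : (0 : ℝ) < 8 * 10 ^ A := by positivity
  have log_C : log (8 * 10 ^ A) = log 8 + A * log 10 := by
    rw [log_mul (by norm_num) (by positivity), log_rpow (by norm_num)]
  have hKM : 80 * M ≤ K * M := by gcongr
  refine ⟨fun r ⟨hr, hrR⟩ ↦ ?_, fun r hRr ↦ ?_⟩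
  · have hr_pos : 0 < r := by linarith
    rw [← exp_log (show 0 < r / M by positivity)]
    refine inv_mul_exp_le_and_exp_le_mul_exp hC (log_C ▸ ?_)
    exact abs_kerrBeta_sub_log_le hχ hχ_mem hχ_zero hM hα (by linarith) hr (by linarith)
  · have hr_pos : 0 < r := by linarith
    have exp_model : exp (log (K * M / M) + α * log (r / (K * M))) = K * (r / (K * M)) ^ α := by
      rw [mul_div_cancel_right₀ K hM.ne', exp_add, exp_log hK_pos, mul_comm α,
        rpow_def_of_pos (by positivity)]
    rw [← exp_model]
    refine inv_mul_exp_le_and_exp_le_mul_exp hC (log_C ▸ ?_)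
    exact abs_kerrBeta_sub_log_add_mul_log_le hχ hχ_mem hχ_zero
      (fun s hs ↦ hχ_one s (by linarith)) hM hα (by linarith) (by linarith) (by linarith)

/-- The two-regime growth estimate (outs52) for the weight `e^β`: `e^{β(r)} ≈ r/M` for
`r ∈ [8M, 10C₄⁴M]` and `e^{β(r)} ≈ C₄⁴ (r/(C₄⁴M))^α` for `r ≥ (1/10)C₄⁴M`. -/
theorem beta_weight_growth :
    ∃ C : ℝ, 1 ≤ C ∧
      ∀ (M α C₄ : ℝ) (χ : ℝ → ℝ),
        0 < M → α ∈ Set.Ioo (0 : ℝ) 2 → 4 ≤ C₄ →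
        ContDiff ℝ (⊤ : ℕ∞) χ → Monotone χ →
        (∀ s : ℝ, χ s ∈ Set.Icc (0 : ℝ) 1) →
        (∀ s : ℝ, s ≤ C₄ ^ 4 * M → χ s = 0) →
        (∀ s : ℝ, 2 * C₄ ^ 4 * M - 2 * M ≤ s → χ s = 1) →
        (∀ r ∈ Set.Icc (8 * M) (10 * C₄ ^ 4 * M),
          C⁻¹ * (r / M) ≤ Real.exp (kerrBeta M α χ r) ∧
          Real.exp (kerrBeta M α χ r) ≤ C * (r / M)) ∧
        (∀ r : ℝ, 1 / 10 * C₄ ^ 4 * M ≤ r →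
          C⁻¹ * (C₄ ^ 4 * (r / (C₄ ^ 4 * M)) ^ α) ≤ Real.exp (kerrBeta M α χ r) ∧
          Real.exp (kerrBeta M α χ r) ≤ C * (C₄ ^ 4 * (r / (C₄ ^ 4 * M)) ^ α)) :=
  ⟨8 * 10 ^ (1 : ℝ), by norm_num, fun M α C₄ χ hM hα hC hχ _ hχ_mem hχ_zero hχ_one ↦
    beta_weight_growth_general hM (abs_le.2 ⟨by linarith [hα.1], by linarith [hα.2]⟩)
      (by linarith [pow_le_pow_left₀ (by norm_num) hC 4]) hχ.continuous.locallyIntegrable hχ_mem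
      hχ_zero fun s hs ↦ hχ_one s (by linarith [show 0 ≤ C₄ ^ 4 * M by positivity])⟩
end

section
/- Let M > 0 and a ∈ [0, M), set r_H := M + √(M² − a²), and let r > r_H and θ ∈ ℝ with sin θ ≠ 0. With Δ := r² + a² − 2Mr, q² := r² + a² (cos θ)², Σ² := (r² + a²)² − a² (sin θ)² Δ, define g_tt := −(Δ − a² (sin θ)²)/q², g_tφ := −2 a M r (sin θ)²/q², g_φφ := Σ² (sin θ)²/q². Then there exists c ∈ ℝ such that g_tt + 2c·g_tφ + c²·g_φφ < 0. -/
/-!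
In the Carter frame the restriction of the Kerr metric to the orbits of `T` and `Z` is diagonal:
`q² g = -Δ (dt - a sin²θ dφ)² + sin²θ (a dt - (r² + a²) dφ)²`.
The second form vanishes on `T + cZ` exactly for `c = a / (r² + a²)`, and this combination has
square norm `-Δ q² / (r² + a²)²`, which is negative wherever `Δ > 0`. Outside the horizon `Δ > 0`
because `Δ = (r - M)² - (M² - a²)`.
-/

namespace Kerr

/-- The Boyer–Lindquist function `Δ`, whose largest root for `|a| ≤ M` is the horizon
radius `M + √(M² - a²)`. -/
def delta (M a r : ℝ) : ℝ := r ^ 2 + a ^ 2 - 2 * M * r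

/-- The Boyer–Lindquist function `q²`, which vanishes only on the ring singularity. It is a single
real number here, not the square of a separately defined `q`. -/
noncomputable def qSq (a r θ : ℝ) : ℝ := r ^ 2 + a ^ 2 * Real.cos θ ^ 2

/-- The Boyer–Lindquist function `Σ²`. It is a single real number here, possibly negative for
`r < 0`, not the square of a separately defined `Σ`. -/
noncomputable def sigmaSq (M a r θ : ℝ) : ℝ :=
  (r ^ 2 + a ^ 2) ^ 2 - a ^ 2 * Real.sin θ ^ 2 * delta M a r

/-- The metric component `g_tt = g(T, T)`. Like the other components it has the junk value `0` on
the ring singularity `q² = 0`. -/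
noncomputable def gtt (M a r θ : ℝ) : ℝ :=
  -(delta M a r - a ^ 2 * Real.sin θ ^ 2) / qSq a r θ

/-- The metric component `g_tφ = g(T, Z)`. -/
noncomputable def gtphi (M a r θ : ℝ) : ℝ :=
  -(2 * a * M * r * Real.sin θ ^ 2) / qSq a r θ

/-- The metric component `g_φφ = g(Z, Z)`. -/
noncomputable def gphiphi (M a r θ : ℝ) : ℝ :=
  sigmaSq M a r θ * Real.sin θ ^ 2 / qSq a r θ

/-- The square norm `g(T + cZ, T + cZ)` of a combination of the stationary and axial Killing
fields; the combination is timelike when this is negative. -/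
noncomputable def killingNormSq (M a r θ c : ℝ) : ℝ :=
  gtt M a r θ + 2 * c * gtphi M a r θ + c ^ 2 * gphiphi M a r θ

variable {M a r θ : ℝ}

theorem delta_pos_of_horizon_lt (hr : M + Real.sqrt (M ^ 2 - a ^ 2) < r) : 0 < delta M a r := by
  have sq_lt : M ^ 2 - a ^ 2 < (r - M) ^ 2 := Real.lt_sq_of_sqrt_lt (by linarith)
  calc 0 < (r - M) ^ 2 - (M ^ 2 - a ^ 2) := sub_pos.mpr sq_lt
    _ = delta M a r := by rw [delta]; ring

theorem qSq_nonneg (a r θ : ℝ) : 0 ≤ qSq a r θ := by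
  rw [qSq]; positivity

theorem qSq_pos_of_ne_zero (a θ : ℝ) (hr : r ≠ 0) : 0 < qSq a r θ := by
  rw [qSq]; positivity

theorem qSq_add_sin_sq (a r θ : ℝ) : qSq a r θ + a ^ 2 * Real.sin θ ^ 2 = r ^ 2 + a ^ 2 := by
  rw [qSq, Real.cos_sq']; ring

theorem sq_add_sq_pos_of_qSq_pos (hq : 0 < qSq a r θ) : 0 < r ^ 2 + a ^ 2 := by
  rw [← qSq_add_sin_sq a r θ]; positivity

theorem killingNormSq_eq_carter (M a r θ c : ℝ) :
    killingNormSq M a r θ c =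
      (Real.sin θ ^ 2 * (a - (r ^ 2 + a ^ 2) * c) ^ 2
        - delta M a r * (1 - a * Real.sin θ ^ 2 * c) ^ 2) / qSq a r θ := by
  rw [killingNormSq, gtt, gtphi, gphiphi, sigmaSq, delta]
  ring

theorem killingNormSq_div_sq_add_sq (M : ℝ) (hq : 0 < qSq a r θ) :
    killingNormSq M a r θ (a / (r ^ 2 + a ^ 2)) =
      -(delta M a r * qSq a r θ / (r ^ 2 + a ^ 2) ^ 2) := by
  have sum_pos : 0 < r ^ 2 + a ^ 2 := sq_add_sq_pos_of_qSq_pos hq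
  have spacelike_part : a - (r ^ 2 + a ^ 2) * (a / (r ^ 2 + a ^ 2)) = 0 := by
    rw [mul_div_cancel₀ _ sum_pos.ne', sub_self]
  have timelike_part :
      1 - a * Real.sin θ ^ 2 * (a / (r ^ 2 + a ^ 2)) = qSq a r θ / (r ^ 2 + a ^ 2) := by
    rw [eq_div_iff sum_pos.ne', sub_mul, mul_assoc, div_mul_cancel₀ _ sum_pos.ne']
    linear_combination -qSq_add_sin_sq a r θ
  rw [killingNormSq_eq_carter, spacelike_part, timelike_part]
  field_simp
  ring

end Kerr

theorem timelike_combination_in_DOC_general {M a r θ : ℝ} (hΔ : 0 < Kerr.delta M a r)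
    (hq : Kerr.qSq a r θ ≠ 0) : ∃ c : ℝ, Kerr.killingNormSq M a r θ c < 0 := by
  have q_pos : 0 < Kerr.qSq a r θ := (Kerr.qSq_nonneg a r θ).lt_of_ne' hq
  have sum_pos : 0 < r ^ 2 + a ^ 2 := Kerr.sq_add_sq_pos_of_qSq_pos q_pos
  refine ⟨a / (r ^ 2 + a ^ 2), ?_⟩
  rw [Kerr.killingNormSq_div_sq_add_sq M q_pos, neg_lt_zero]
  positivity

/-- At every point of the domain of outer communication of Kerr off the axis, some
combination `T + cZ` of the stationary and axial Killing fields is timelike: with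
`r_H = M + √(M² − a²)`, `r > r_H`, `sin θ ≠ 0`, there is `c ∈ ℝ` with
`g_tt + 2c g_tφ + c² g_φφ < 0`. -/
theorem timelike_combination_in_DOC (M a r θ rH Δ q2 Sig2 gtt gtphi gphiphi : ℝ)
    (hM : 0 < M) (ha : a ∈ Set.Ico (0 : ℝ) M)
    (hrH : rH = M + Real.sqrt (M ^ 2 - a ^ 2))
    (hr : rH < r) (hsin : Real.sin θ ≠ 0)
    (hΔ : Δ = r ^ 2 + a ^ 2 - 2 * M * r)
    (hq : q2 = r ^ 2 + a ^ 2 * (Real.cos θ) ^ 2)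
    (hSig : Sig2 = (r ^ 2 + a ^ 2) ^ 2 - a ^ 2 * (Real.sin θ) ^ 2 * Δ)
    (hgtt : gtt = -(Δ - a ^ 2 * (Real.sin θ) ^ 2) / q2)
    (hgtphi : gtphi = -(2 * a * M * r * (Real.sin θ) ^ 2) / q2)
    (hgphiphi : gphiphi = Sig2 * (Real.sin θ) ^ 2 / q2) :
    ∃ c : ℝ, gtt + 2 * c * gtphi + c ^ 2 * gphiphi < 0 := by
  have r_pos : 0 < r := by linarith [Real.sqrt_nonneg (M ^ 2 - a ^ 2)]
  subst hrH hΔ hq hSig hgtt hgtphi hgphiphi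
  exact timelike_combination_in_DOC_general (Kerr.delta_pos_of_horizon_lt hr)
    (Kerr.qSq_pos_of_ne_zero a θ r_pos.ne').ne'
end
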